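/- For every integer t ≥ 2, every q-ary t-traceability code of length N is also a q-ary t-parent-identifying code of length N. -/

import Mathlib

/-- The descendant set of a set `D` of codewords: all words `x` such that in every
coordinate `i`, the symbol `x i` appears as the `i`-th symbol of some codeword of `D`. -/
def descSet {N q : ℕ} (D : Finset (Fin N → Fin q)) : Set (Fin N → Fin q) :=
  {x | ∀ i : Fin N, ∃ c ∈ D, x i = c i}

/-- `C` is a `t`-traceability (t-TA) code: for every `D ⊆ C` with `|D| ≤ t` and every
`x ∈ desc(D)`, the minimum of `d(x,c)` over `c ∈ D` is strictly smaller than `d(x,y)`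
for every `y ∈ C \ D`. -/
def IsTA {N q : ℕ} (t : ℕ) (C : Finset (Fin N → Fin q)) : Prop :=
  ∀ D : Finset (Fin N → Fin q), D ⊆ C → D.card ≤ t →
    ∀ x ∈ descSet D, ∃ c ∈ D, ∀ y ∈ C \ D, hammingDist x c < hammingDist x y

/-- `C` is a `t`-parent-identifying (t-IPP) code: for every word `x`, if the collection
`P_t(x)` of parent sets `D ⊆ C`, `|D| ≤ t`, `x ∈ desc(D)` is nonempty, then the
intersection of all members of `P_t(x)` is nonempty. -/
def IsIPP {N q : ℕ} (t : ℕ) (C : Finset (Fin N → Fin q)) : Prop :=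
  ∀ x : Fin N → Fin q,
    (∃ D : Finset (Fin N → Fin q), D ⊆ C ∧ D.card ≤ t ∧ x ∈ descSet D) →
    ∃ c : Fin N → Fin q,
      ∀ D : Finset (Fin N → Fin q), D ⊆ C → D.card ≤ t → x ∈ descSet D → c ∈ D

/-- For every `t ≥ 2`, every `q`-ary `t`-traceability code of length `N` is also a
`q`-ary `t`-parent-identifying code of length `N`. -/
theorem stmt_18 (N q t : ℕ) (ht : 2 ≤ t) (C : Finset (Fin N → Fin q))
    (hC : IsTA t C) : IsIPP t C := by 
  rintro x ⟨D₀, h1, h2, h3⟩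
  obtain ⟨c₀, hc₀, -⟩ := hC D₀ h1 h2 x h3
  obtain ⟨c, hc, hmin⟩ := C.exists_min_image (fun c => hammingDist x c) ⟨c₀, h1 hc₀⟩
  refine ⟨c, fun D hD ht' hx => ?_⟩
  by_contra hcD
  obtain ⟨c', hc', h⟩ := hC D hD ht' x hx
  have a := h c (Finset.mem_sdiff.mpr ⟨hc, hcD⟩)
  have b := hmin c' (hD hc')
  exact absurd a (not_lt.mpr b)
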